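/- Let (E,d_E) be a separable metric space, let p ≥ 1, let μ ∈ 𝒫_p(E) and let n ∈ ℕ. Let μ_n and μ_n' be two independent empirical measures of μ, each with sample size n (i.e., built from 2n mutually independent samples of μ). Then ‖W_p(μ_n, μ)‖_{L^p} ≤ ‖W_p(μ_n, μ_n')‖_{L^p} ≤ 2 · ‖W_p(μ_n, μ)‖_{L^p}, where for a random variable W, ‖W‖_{L^p} = (𝔼|W|^p)^{1/p}. -/

import Mathlib

open MeasureTheory ENNReal Filter

noncomputable section

/-- The `p`-Wasserstein distance between two measures on a metric space, as an
extended nonnegative real: the infimum over all couplings `γ` (measures on `E × E`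
with the prescribed marginals) of `(∫ d(x,y)^p dγ)^(1/p)`. -/
def Wp {E : Type*} [MetricSpace E] [MeasurableSpace E] (p : ℝ) (μ ν : Measure E) : ℝ≥0∞ :=
  ⨅ γ ∈ {γ : Measure (E × E) | γ.map Prod.fst = μ ∧ γ.map Prod.snd = ν},
    (∫⁻ z, edist z.1 z.2 ^ p ∂γ) ^ (1 / p)

/-- The (uniform) discrete measure `(1/n) ∑ δ_{X i}`. -/
def empiricalMeasure {E : Type*} [MeasurableSpace E] (n : ℕ) (X : Fin n → E) : Measure E :=
  (n : ℝ≥0∞)⁻¹ • ∑ i, Measure.dirac (X i)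

/-- The law of `n` independent samples of `μ`. -/
def sampleMeasure {E : Type*} [MeasurableSpace E] (μ : Measure E) (n : ℕ) :
    Measure (Fin n → E) :=
  Measure.pi fun _ => μ

/-- `𝔼[W_p(μ_n, μ)]`, where `μ_n` is the empirical measure of `μ` with sample size `n`. -/
def expWp {E : Type*} [MetricSpace E] [MeasurableSpace E] (p : ℝ) (μ : Measure E) (n : ℕ) :
    ℝ≥0∞ :=
  ∫⁻ X, Wp p (empiricalMeasure n X) μ ∂(sampleMeasure μ n)

/-- `(𝔼[W_p(μ_n, μ)^p])^{1/p}`, where `μ_n` is the empirical measure of `μ` with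
sample size `n`. -/
def expWpPow {E : Type*} [MetricSpace E] [MeasurableSpace E] (p : ℝ) (μ : Measure E) (n : ℕ) :
    ℝ≥0∞ :=
  (∫⁻ X, (Wp p (empiricalMeasure n X) μ) ^ p ∂(sampleMeasure μ n)) ^ (1 / p)

/-- The optimal uniform quantization error
`b_{n,p}(μ) = inf_{x₁,…,x_n} W_p(μ, (1/n) ∑ δ_{x_i})`. -/
def unifQuantErr {E : Type*} [MetricSpace E] [MeasurableSpace E] (p : ℝ) (n : ℕ)
    (μ : Measure E) : ℝ≥0∞ :=
  ⨅ x : Fin n → E, Wp p μ (empiricalMeasure n x)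

/-- The optimal quantization error `e_{n,p}(μ)`: the infimum of `W_p(μ, ν)` over all
probability measures `ν` supported on at most `n` points. -/
def quantErr {E : Type*} [MetricSpace E] [MeasurableSpace E] (p : ℝ) (n : ℕ)
    (μ : Measure E) : ℝ≥0∞ :=
  ⨅ ν ∈ {ν : Measure E | IsProbabilityMeasure ν ∧
      ∃ S : Finset E, S.card ≤ n ∧ ν (↑S : Set E)ᶜ = 0}, Wp p μ ν

/-- `μ` has a finite `p`-th moment: `∫ d(x, x₀)^p dμ(x) < ∞` for some `x₀`. -/
def HasFiniteMoment {E : Type*} [MetricSpace E] [MeasurableSpace E] (p : ℝ)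
    (μ : Measure E) : Prop :=
  ∃ x₀ : E, ∫⁻ x, edist x x₀ ^ p ∂μ ≠ ∞

end

/-!
For the lower bound, couple the uniform measure on the sample `X` with `μ` as follows: draw an
independent sample `Y`, let `σ` be an optimal matching of `X` with `Y`, and pair `X i` with
`Y (σ i)` for a uniform index `i`. Each `σ` permutes the indices, so `Y (σ i)` has law `μ`, and by
Birkhoff's theorem matchings are optimal among all couplings, so the expected cost is
`𝔼[W_p(μ_n, μ_n')^p | X]`. The upper bound is the triangle inequality through `μ` followed by
Minkowski's inequality.

Couplings on a space that is not standard Borel need not disintegrate. The triangle inequality with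
an empirical measure at one end survives because everything can be glued along the finite index set
of that measure.
-/

open ProbabilityTheory
open scoped NNReal

section Gluing

variable {α β Ω Ω' : Type*} [MeasurableSpace α] [MeasurableSpace β]
  [MeasurableSpace Ω] [StandardBorelSpace Ω] [Nonempty Ω]
  [MeasurableSpace Ω'] [StandardBorelSpace Ω'] [Nonempty Ω']

theorem isFiniteMeasure_iff_of_measurePreserving {f : α → β} {μ : Measure α} {ν : Measure β}
    (hf : MeasurePreserving f μ ν) : IsFiniteMeasure μ ↔ IsFiniteMeasure ν := by
  rw [← hf.map_eq, Measure.isFiniteMeasure_map_iff hf.aemeasurable]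

theorem exists_gluing {f : β → α} {μ : Measure α} {ν : Measure β} {ρ : Measure (α × Ω)}
    [IsFiniteMeasure μ] (hf : MeasurePreserving f ν μ) (hρ : MeasurePreserving Prod.fst ρ μ) :
    ∃ θ : Measure (β × Ω), MeasurePreserving Prod.fst θ ν ∧
      MeasurePreserving (Prod.map f id) θ ρ := by
  have : IsFiniteMeasure ν := (isFiniteMeasure_iff_of_measurePreserving hf).mpr ‹_›
  have : IsFiniteMeasure ρ := (isFiniteMeasure_iff_of_measurePreserving hρ).mpr ‹_›
  have hfm : Measurable f := hf.measurable
  let κ : Kernel β Ω := ρ.condKernel.comap f hfm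
  refine ⟨ν ⊗ₘ κ, ⟨measurable_fst, Measure.fst_compProd _ _⟩, by fun_prop, ?_⟩
  refine Measure.ext_of_lintegral _ fun g hg ↦ ?_
  calc ∫⁻ z, g z ∂(ν ⊗ₘ κ).map (Prod.map f id)
      = ∫⁻ b, ∫⁻ ω, g (f b, ω) ∂ρ.condKernel (f b) ∂ν := by
        rw [lintegral_map hg (by fun_prop), Measure.lintegral_compProd (by fun_prop)]
        rfl
    _ = ∫⁻ a, ∫⁻ ω, g (a, ω) ∂ρ.condKernel a ∂μ :=
        hf.lintegral_comp hg.lintegral_kernel_prod_right'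
    _ = ∫⁻ z, g z ∂ρ := by rw [← hρ.map_eq]; exact Measure.lintegral_condKernel hg

theorem exists_fiberProduct [MeasurableEq α] {f : β → α} {X : Ω → α} {μ : Measure α}
    {ν : Measure β} {P : Measure Ω} [IsFiniteMeasure P]
    (hf : MeasurePreserving f ν μ) (hX : MeasurePreserving X P μ) :
    ∃ θ : Measure (β × Ω), MeasurePreserving Prod.fst θ ν ∧ MeasurePreserving Prod.snd θ P ∧
      ∀ᵐ z ∂θ, f z.1 = X z.2 := by
  have : IsFiniteMeasure μ := (isFiniteMeasure_iff_of_measurePreserving hX).mp ‹_›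
  have hXm : Measurable X := hX.measurable
  have hgraph : Measurable fun ω ↦ (X ω, ω) := by fun_prop
  obtain ⟨θ, hθν, hθX⟩ := exists_gluing hf
    (MeasurePreserving.map_of_comp (f := fun ω ↦ (X ω, ω)) hX measurable_fst hgraph)
  have hsnd : MeasurePreserving Prod.snd (P.map fun ω ↦ (X ω, ω)) P :=
    MeasurePreserving.map_of_comp (.id P) measurable_snd hgraph
  refine ⟨θ, hθν, hsnd.comp hθX, hθX.quasiMeasurePreserving.ae (p := fun w ↦ w.1 = X w.2) ?_⟩
  rw [ae_map_iff hgraph.aemeasurable (measurableSet_eq_fun (by fun_prop) (by fun_prop))]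
  exact .of_forall fun _ ↦ rfl

theorem exists_lift_coupling [MeasurableEq α] [MeasurableEq β] {X : Ω → α} {Y : Ω' → β}
    {μ : Measure α} {ν : Measure β} {P : Measure Ω} {Q : Measure Ω'} {π : Measure (α × β)}
    [IsFiniteMeasure P] [IsFiniteMeasure Q]
    (hX : MeasurePreserving X P μ) (hY : MeasurePreserving Y Q ν)
    (hμ : MeasurePreserving Prod.fst π μ) (hν : MeasurePreserving Prod.snd π ν) :
    ∃ τ : Measure (Ω × Ω'), MeasurePreserving Prod.fst τ P ∧ MeasurePreserving Prod.snd τ Q ∧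
      MeasurePreserving (Prod.map X Y) τ π := by
  have hXm : Measurable X := hX.measurable
  have hYm : Measurable Y := hY.measurable
  obtain ⟨θ, hθπ, hθP, hθX⟩ := exists_fiberProduct hμ hX
  obtain ⟨η, hηθ, hηQ, hηY⟩ := exists_fiberProduct (hν.comp hθπ) hY
  let r : ((α × β) × Ω) × Ω' → Ω × Ω' := Prod.map Prod.snd id
  have hr : Measurable r := by fun_prop
  refine ⟨η.map r, .map_of_comp (f := r) (hθP.comp hηθ) measurable_fst hr,
    .map_of_comp (f := r) hηQ measurable_snd hr,
    .map_of_comp (f := r) ?_ (by fun_prop) hr⟩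
  refine (hθπ.comp hηθ).congr (by fun_prop) ?_
  filter_upwards [hηθ.quasiMeasurePreserving.ae hθX, hηY] with z hzX hzY
  exact Prod.ext hzX hzY

end Gluing

section Wasserstein

variable {E : Type*} [MetricSpace E] [MeasurableSpace E] {p : ℝ} {μ ν ρ : Measure E}

theorem le_Wp_iff {c : ℝ≥0∞} :
    c ≤ Wp p μ ν ↔ ∀ γ : Measure (E × E),
      MeasurePreserving Prod.fst γ μ → MeasurePreserving Prod.snd γ ν →
        c ≤ (∫⁻ z, edist z.1 z.2 ^ p ∂γ) ^ (1 / p) := by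
  simp only [Wp, le_iInf_iff, Set.mem_ofPred_eq, and_imp]
  exact ⟨fun h γ hμ hν ↦ h γ hμ.map_eq hν.map_eq,
    fun h γ hμ hν ↦ h γ ⟨measurable_fst, hμ⟩ ⟨measurable_snd, hν⟩⟩

variable [OpensMeasurableSpace E] [SecondCountableTopology E]
  {Ω : Type*} [MeasurableSpace Ω] {P : Measure Ω}

theorem Wp_le_of_measurePreserving {X Y : Ω → E}
    (hX : MeasurePreserving X P μ) (hY : MeasurePreserving Y P ν) :
    Wp p μ ν ≤ (∫⁻ ω, edist (X ω) (Y ω) ^ p ∂P) ^ (1 / p) := by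
  have hXY : Measurable fun ω ↦ (X ω, Y ω) := hX.measurable.prodMk hY.measurable
  refine (le_Wp_iff.mp le_rfl (P.map fun ω ↦ (X ω, Y ω)) (.map_of_comp hX measurable_fst hXY)
    (.map_of_comp hY measurable_snd hXY)).trans_eq ?_
  rw [lintegral_map (by fun_prop) hXY]

theorem Wp_comm : Wp p μ ν = Wp p ν μ := by
  suffices h : ∀ μ ν : Measure E, Wp p μ ν ≤ Wp p ν μ from (h μ ν).antisymm (h ν μ)
  intro μ ν
  refine le_Wp_iff.mpr fun γ hγν hγμ ↦ ?_
  simpa only [edist_comm] using Wp_le_of_measurePreserving (p := p) hγμ hγν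

theorem Wp_triangle [StandardBorelSpace Ω] [Nonempty Ω] [IsFiniteMeasure P] {X : Ω → E}
    (hp : 1 ≤ p) (hX : MeasurePreserving X P μ) : Wp p μ ν ≤ Wp p μ ρ + Wp p ρ ν := by
  rw [← tsub_le_iff_right, le_Wp_iff]
  intro γ hγμ hγρ
  rw [tsub_le_iff_right, ← tsub_le_iff_left, le_Wp_iff]
  intro γ' hγ'ρ hγ'ν
  rw [tsub_le_iff_left]
  have : IsFiniteMeasure μ := (isFiniteMeasure_iff_of_measurePreserving hX).mp ‹_›
  have : IsFiniteMeasure γ := (isFiniteMeasure_iff_of_measurePreserving hγμ).mpr ‹_›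
  have : IsFiniteMeasure ρ := (isFiniteMeasure_iff_of_measurePreserving hγρ).mp ‹_›
  have hXm : Measurable X := hX.measurable
  obtain ⟨τ, hτγ, -, hτX⟩ := exists_fiberProduct hγμ hX
  obtain ⟨θ, hθγ', hθτ⟩ := exists_gluing hγ'ρ <|
    MeasurePreserving.map_of_comp (f := fun z : (E × E) × Ω ↦ (z.1.2, z.2)) (hγρ.comp hτγ)
      measurable_fst (by fun_prop)
  have hθX : MeasurePreserving (fun z : (E × E) × Ω ↦ (X z.2, z.1.1)) θ γ := by
    have hτ : MeasurePreserving (fun z : (E × E) × Ω ↦ (X z.2, z.1.2)) τ γ :=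
      hτγ.congr (by fun_prop) (hτX.mono fun z hz ↦ Prod.ext hz rfl)
    exact (MeasurePreserving.map_of_comp (g := fun w : E × Ω ↦ (X w.2, w.1)) hτ
      (by fun_prop) (by fun_prop)).comp hθτ
  calc Wp p μ ν
      ≤ (∫⁻ z, edist (X z.2) z.1.2 ^ p ∂θ) ^ (1 / p) :=
        Wp_le_of_measurePreserving (hγμ.comp hθX) (hγ'ν.comp hθγ')
    _ ≤ (∫⁻ z, (edist (X z.2) z.1.1 + edist z.1.1 z.1.2) ^ p ∂θ) ^ (1 / p) := by
        gcongr; exact edist_triangle _ _ _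
    _ ≤ (∫⁻ z, edist (X z.2) z.1.1 ^ p ∂θ) ^ (1 / p)
          + (∫⁻ z, edist z.1.1 z.1.2 ^ p ∂θ) ^ (1 / p) :=
        ENNReal.lintegral_Lp_add_le (by fun_prop) (by fun_prop) hp
    _ = (∫⁻ z, edist z.1 z.2 ^ p ∂γ) ^ (1 / p) + (∫⁻ z, edist z.1 z.2 ^ p ∂γ') ^ (1 / p) := by
        congr 2
        · exact hθX.lintegral_comp (f := fun z : E × E ↦ edist z.1 z.2 ^ p) (by fun_prop)
        · exact hθγ'.lintegral_comp (f := fun z : E × E ↦ edist z.1 z.2 ^ p) (by fun_prop)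

end Wasserstein

section EmpiricalMeasure

variable {E F : Type*} [MeasurableSpace E] [MeasurableSpace F] {n : ℕ}

theorem lintegral_empiricalMeasure (X : Fin n → E) {f : E → ℝ≥0∞} (hf : Measurable f) :
    ∫⁻ x, f x ∂empiricalMeasure n X = (n : ℝ≥0∞)⁻¹ * ∑ i, f (X i) := by
  simp only [empiricalMeasure, lintegral_smul_measure, lintegral_finsetSum_measure,
    lintegral_dirac' _ hf, smul_eq_mul]

theorem measurePreserving_empiricalMeasure (X : Fin n → E) {f : E → F} (hf : Measurable f) :
    MeasurePreserving f (empiricalMeasure n X) (empiricalMeasure n (f ∘ X)) := by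
  refine ⟨hf, Measure.ext_of_lintegral _ fun g hg ↦ ?_⟩
  rw [lintegral_map hg hf, lintegral_empiricalMeasure X (by fun_prop),
    lintegral_empiricalMeasure (f ∘ X) hg]
  rfl

theorem measurePreserving_empiricalMeasure_id (X : Fin n → E) :
    MeasurePreserving X (empiricalMeasure n id) (empiricalMeasure n X) :=
  measurePreserving_empiricalMeasure id .of_discrete

theorem empiricalMeasure_comp_perm (X : Fin n → E) (σ : Equiv.Perm (Fin n)) :
    empiricalMeasure n (X ∘ σ) = empiricalMeasure n X := by
  simp only [empiricalMeasure, Function.comp_apply, Equiv.sum_comp σ fun i ↦ Measure.dirac (X i)]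

theorem measurePreserving_perm_empiricalMeasure (σ : Equiv.Perm (Fin n)) :
    MeasurePreserving σ (empiricalMeasure n id) (empiricalMeasure n id) := by
  have hσ := measurePreserving_empiricalMeasure_id σ
  rwa [← Function.id_comp σ, empiricalMeasure_comp_perm] at hσ

instance isProbabilityMeasure_empiricalMeasure [NeZero n] (X : Fin n → E) :
    IsProbabilityMeasure (empiricalMeasure n X) := by
  refine ⟨?_⟩
  simp [empiricalMeasure, ENNReal.inv_mul_cancel, NeZero.ne n]

instance isProbabilityMeasure_sampleMeasure (μ : Measure E) [IsProbabilityMeasure μ] :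
    IsProbabilityMeasure (sampleMeasure μ n) := by
  unfold sampleMeasure; infer_instance

end EmpiricalMeasure

section OptimalMatching

variable {ι : Type*} [Fintype ι] [DecidableEq ι]

theorem exists_perm_sum_le_of_mem_doublyStochastic {M : Matrix ι ι ℝ}
    (hM : M ∈ doublyStochastic ℝ ι) (c : ι → ι → ℝ) :
    ∃ σ : Equiv.Perm ι, ∑ i, c i (σ i) ≤ ∑ i, ∑ j, M i j * c i j := by
  have hcost : ConcaveOn ℝ Set.univ fun M : Matrix ι ι ℝ ↦ ∑ i, ∑ j, M i j * c i j :=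
    ⟨convex_univ, fun M _ N _ a b _ _ _ ↦ le_of_eq <| by
      simp only [smul_eq_mul, Finset.mul_sum, Matrix.add_apply, Matrix.smul_apply, add_mul,
        Finset.sum_add_distrib, mul_assoc]⟩
  have hconv : M ∈ convexHull ℝ {σ.permMatrix ℝ | σ : Equiv.Perm ι} := by
    rwa [← doublyStochastic_eq_convexHull_permMatrix]
  obtain ⟨_, ⟨σ, rfl⟩, hσ⟩ := hcost.exists_le_of_mem_convexHull (Set.subset_univ _) hconv
  refine ⟨σ, le_of_eq_of_le ?_ hσ⟩
  simp [Equiv.Perm.permMatrix, PEquiv.toMatrix_apply, Equiv.toPEquiv_apply]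

theorem empiricalMeasure_id_real_singleton {n : ℕ} (i : Fin n) :
    (empiricalMeasure n id).real {i} = (n : ℝ)⁻¹ := by
  simp [empiricalMeasure, measureReal_def, Finset.sum_apply, Set.indicator_apply]

theorem mul_measureReal_singleton_mem_doublyStochastic {n : ℕ} [NeZero n]
    {π : Measure (Fin n × Fin n)} (hfst : MeasurePreserving Prod.fst π (empiricalMeasure n id))
    (hsnd : MeasurePreserving Prod.snd π (empiricalMeasure n id)) :
    (.of fun i j ↦ n * π.real {(i, j)} : Matrix (Fin n) (Fin n) ℝ) ∈
      doublyStochastic ℝ (Fin n) := by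
  have : IsFiniteMeasure π := (isFiniteMeasure_iff_of_measurePreserving hfst).mpr inferInstance
  have hn : (n : ℝ) ≠ 0 := NeZero.ne _
  refine mem_doublyStochastic_iff_sum.mpr ⟨fun i j ↦ by simp only [Matrix.of_apply]; positivity,
    fun i ↦ ?_, fun j ↦ ?_⟩
  · have hrow : ∑ j, π.real {(i, j)} = (n : ℝ)⁻¹ := by
      rw [← empiricalMeasure_id_real_singleton i, ← hfst.measureReal_preimage (by measurability),
        ← Set.prod_univ, ← Finset.coe_singleton, ← Finset.coe_univ, ← Finset.coe_product,
        ← sum_measureReal_singleton, Finset.sum_product, Finset.sum_singleton]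
    simp only [Matrix.of_apply, ← Finset.mul_sum, hrow, mul_inv_cancel₀ hn]
  · have hcol : ∑ i, π.real {(i, j)} = (n : ℝ)⁻¹ := by
      rw [← empiricalMeasure_id_real_singleton j, ← hsnd.measureReal_preimage (by measurability),
        ← Set.univ_prod, ← Finset.coe_singleton, ← Finset.coe_univ, ← Finset.coe_product,
        ← sum_measureReal_singleton, Finset.sum_product_right, Finset.sum_singleton]
    simp only [Matrix.of_apply, ← Finset.mul_sum, hcol, mul_inv_cancel₀ hn]

theorem exists_perm_lintegral_le {n : ℕ} [NeZero n] {π : Measure (Fin n × Fin n)}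
    (hfst : MeasurePreserving Prod.fst π (empiricalMeasure n id))
    (hsnd : MeasurePreserving Prod.snd π (empiricalMeasure n id)) (c : Fin n → Fin n → ℝ≥0) :
    ∃ σ : Equiv.Perm (Fin n),
      ∫⁻ i, (c i (σ i) : ℝ≥0∞) ∂empiricalMeasure n id ≤ ∫⁻ z, (c z.1 z.2 : ℝ≥0∞) ∂π := by
  have : IsFiniteMeasure π := (isFiniteMeasure_iff_of_measurePreserving hfst).mpr inferInstance
  obtain ⟨σ, hσ⟩ := exists_perm_sum_le_of_mem_doublyStochastic
    (mul_measureReal_singleton_mem_doublyStochastic hfst hsnd) fun i j ↦ c i j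
  refine ⟨σ, ?_⟩
  have hcost : ∑ i, (c i (σ i) : ℝ) ≤ n * ∑ z, c z.1 z.2 * π.real {z} :=
    hσ.trans_eq <| by
      simp only [Matrix.of_apply, Fintype.sum_prod_type, Finset.mul_sum]
      exact Finset.sum_congr rfl fun i _ ↦ Finset.sum_congr rfl fun j _ ↦ by ring
  calc ∫⁻ i, (c i (σ i) : ℝ≥0∞) ∂empiricalMeasure n id
      = (n : ℝ≥0∞)⁻¹ * ENNReal.ofReal (∑ i, (c i (σ i) : ℝ)) := by
        rw [lintegral_empiricalMeasure _ .of_discrete, ENNReal.ofReal_sum_of_nonneg fun _ _ ↦ by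
          positivity]
        simp only [id_eq, ENNReal.ofReal_coe_nnreal]
    _ ≤ (n : ℝ≥0∞)⁻¹ * ENNReal.ofReal (n * ∑ z, c z.1 z.2 * π.real {z}) := by gcongr
    _ = ∑ z, (c z.1 z.2 : ℝ≥0∞) * π {z} := by
        have hn : (n : ℝ≥0∞) ≠ 0 := NeZero.ne _
        rw [ENNReal.ofReal_mul (by positivity), ENNReal.ofReal_natCast, ← mul_assoc,
          ENNReal.inv_mul_cancel hn (by finiteness), one_mul,
          ENNReal.ofReal_sum_of_nonneg fun _ _ ↦ by positivity]
        exact Finset.sum_congr rfl fun z _ ↦ by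
          rw [ENNReal.ofReal_mul NNReal.zero_le_coe, ENNReal.ofReal_coe_nnreal, ofReal_measureReal]
    _ = ∫⁻ z, (c z.1 z.2 : ℝ≥0∞) ∂π := (lintegral_fintype _).symm

end OptimalMatching

section EmpiricalWasserstein

variable {E : Type*} [MetricSpace E] {p : ℝ} {n : ℕ}

/-- The mean `p`-th power cost of transporting the sample `X` to the sample `Y` by sending `X i`
to `Y (σ i)`. -/
noncomputable def matchingCost (p : ℝ) (X Y : Fin n → E) (σ : Equiv.Perm (Fin n)) : ℝ≥0∞ :=
  (n : ℝ≥0∞)⁻¹ * ∑ i, edist (X i) (Y (σ i)) ^ p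

theorem lintegral_edist_rpow_empiricalMeasure (X Y : Fin n → E) (σ : Equiv.Perm (Fin n)) :
    ∫⁻ i, edist (X i) (Y (σ i)) ^ p ∂empiricalMeasure n id = matchingCost p X Y σ :=
  lintegral_empiricalMeasure _ .of_discrete

variable [MeasurableSpace E] [OpensMeasurableSpace E] [SecondCountableTopology E]

theorem Wp_empiricalMeasure_rpow_le (hp : 0 < p) (X Y : Fin n → E) (σ : Equiv.Perm (Fin n)) :
    Wp p (empiricalMeasure n X) (empiricalMeasure n Y) ^ p ≤ matchingCost p X Y σ := by
  rw [← ENNReal.le_rpow_inv_iff hp, ← one_div, ← lintegral_edist_rpow_empiricalMeasure]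
  exact Wp_le_of_measurePreserving (measurePreserving_empiricalMeasure_id X)
    ((measurePreserving_empiricalMeasure_id Y).comp (measurePreserving_perm_empiricalMeasure σ))

theorem Wp_empiricalMeasure_rpow [NeZero n] (hp : 0 < p) (X Y : Fin n → E) :
    Wp p (empiricalMeasure n X) (empiricalMeasure n Y) ^ p = ⨅ σ, matchingCost p X Y σ := by
  refine le_antisymm (le_iInf fun σ ↦ Wp_empiricalMeasure_rpow_le hp X Y σ) ?_
  rw [← ENNReal.rpow_inv_le_iff hp, le_Wp_iff]
  intro γ hγX hγY
  rw [one_div, ENNReal.rpow_le_rpow_iff (inv_pos.mpr hp)]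
  obtain ⟨π, hfst, hsnd, hπγ⟩ := exists_lift_coupling (measurePreserving_empiricalMeasure_id X)
    (measurePreserving_empiricalMeasure_id Y) hγX hγY
  obtain ⟨σ, hσ⟩ := exists_perm_lintegral_le hfst hsnd fun i j ↦ nndist (X i) (Y j) ^ p
  simp only [ENNReal.coe_rpow_of_nonneg _ hp.le, ← edist_nndist] at hσ
  calc ⨅ σ, matchingCost p X Y σ
      ≤ ∫⁻ i, edist (X i) (Y (σ i)) ^ p ∂empiricalMeasure n id :=
        (iInf_le _ σ).trans_eq (lintegral_edist_rpow_empiricalMeasure X Y σ).symm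
    _ ≤ ∫⁻ z, edist (X z.1) (Y z.2) ^ p ∂π := hσ
    _ = ∫⁻ z, edist z.1 z.2 ^ p ∂γ :=
        hπγ.lintegral_comp (f := fun z : E × E ↦ edist z.1 z.2 ^ p) (by fun_prop)

theorem Wp_empiricalMeasure_triangle [NeZero n] (hp : 1 ≤ p) (X : Fin n → E) (ρ ν : Measure E) :
    Wp p (empiricalMeasure n X) ν ≤ Wp p (empiricalMeasure n X) ρ + Wp p ρ ν :=
  Wp_triangle hp (measurePreserving_empiricalMeasure_id X)

theorem Wp_empiricalMeasure_le_edist [NeZero n] (hp : 0 < p) (X Y : Fin n → E) :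
    Wp p (empiricalMeasure n X) (empiricalMeasure n Y) ≤ edist X Y := by
  calc Wp p (empiricalMeasure n X) (empiricalMeasure n Y)
      ≤ (∫⁻ i, edist (X i) (Y i) ^ p ∂empiricalMeasure n id) ^ (1 / p) :=
        Wp_le_of_measurePreserving (measurePreserving_empiricalMeasure_id X)
          (measurePreserving_empiricalMeasure_id Y)
    _ ≤ (∫⁻ _, edist X Y ^ p ∂empiricalMeasure n (id : Fin n → Fin n)) ^ (1 / p) := by
        gcongr
        exact edist_le_pi_edist X Y _
    _ = edist X Y := by
        rw [lintegral_const, measure_univ, mul_one, one_div, ENNReal.rpow_rpow_inv hp.ne']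

theorem continuous_Wp_empiricalMeasure [NeZero n] (hp : 1 ≤ p) (ν : Measure E) :
    Continuous fun X : Fin n → E ↦ Wp p (empiricalMeasure n X) ν := by
  refine continuous_of_le_add_edist 1 ENNReal.one_ne_top fun X Y ↦ ?_
  calc Wp p (empiricalMeasure n X) ν
      ≤ Wp p (empiricalMeasure n X) (empiricalMeasure n Y) + Wp p (empiricalMeasure n Y) ν :=
        Wp_empiricalMeasure_triangle hp X _ ν
    _ ≤ Wp p (empiricalMeasure n Y) ν + 1 * edist X Y := by
        rw [add_comm, one_mul]
        gcongr
        exact Wp_empiricalMeasure_le_edist (by positivity) X Y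

theorem measurable_matchingCost (σ : Equiv.Perm (Fin n)) :
    Measurable fun z : (Fin n → E) × (Fin n → E) ↦ matchingCost p z.1 z.2 σ := by
  unfold matchingCost
  fun_prop

theorem measurable_Wp_empiricalMeasure_rpow [NeZero n] (hp : 0 < p) :
    Measurable fun z : (Fin n → E) × (Fin n → E) ↦
      Wp p (empiricalMeasure n z.1) (empiricalMeasure n z.2) ^ p := by
  simp only [Wp_empiricalMeasure_rpow hp]
  exact .iInf measurable_matchingCost

end EmpiricalWasserstein

section Selection

theorem exists_measurable_forall_le {Ω ι β : Type*} [MeasurableSpace Ω] [MeasurableSpace ι]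
    [Finite ι] [Nonempty ι] [LinearOrder β] [TopologicalSpace β] [MeasurableSpace β]
    [OrderClosedTopology β] [SecondCountableTopology β] [OpensMeasurableSpace β]
    {c : ι → Ω → β} (hc : ∀ i, Measurable (c i)) :
    ∃ s : Ω → ι, Measurable s ∧ ∀ ω i, c (s ω) ω ≤ c i ω := by
  classical
  obtain ⟨e, he⟩ := exists_surjective_nat ι
  have hmin (ω : Ω) : ∃ k, ∀ i, c (e k) ω ≤ c i ω := by
    obtain ⟨i, hi⟩ := Finite.exists_min fun i ↦ c i ω
    obtain ⟨k, rfl⟩ := he i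
    exact ⟨k, hi⟩
  refine ⟨fun ω ↦ e (Nat.find (hmin ω)), measurable_from_nat.comp (measurable_find hmin fun k ↦ ?_),
    fun ω ↦ Nat.find_spec (hmin ω)⟩
  rw [Set.ofPred_forall]
  exact .iInter fun i ↦ measurableSet_le (hc _) (hc i)

end Selection

section TwoSamples

variable {E : Type*} [MeasurableSpace E] {p : ℝ} {n : ℕ} (μ : Measure E)

theorem measurePreserving_apply_sampleMeasure_prod [NeZero n] [IsProbabilityMeasure μ] :
    MeasurePreserving (fun z : (Fin n → E) × Fin n ↦ z.1 z.2)
      ((sampleMeasure μ n).prod (empiricalMeasure n id)) μ := by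
  have hmeas : Measurable fun z : (Fin n → E) × Fin n ↦ z.1 z.2 :=
    measurable_from_prod_countable_left measurable_pi_apply
  refine ⟨hmeas, Measure.ext_of_lintegral _ fun f hf ↦ ?_⟩
  have hf_meas : Measurable fun z : (Fin n → E) × Fin n ↦ f (z.1 z.2) := hf.comp hmeas
  calc ∫⁻ x, f x ∂((sampleMeasure μ n).prod (empiricalMeasure n id)).map (fun z ↦ z.1 z.2)
      = ∫⁻ i, ∫⁻ Y, f (Y i) ∂sampleMeasure μ n ∂empiricalMeasure n id := by
        rw [lintegral_map hf hmeas, lintegral_prod_symm' _ hf_meas]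
    _ = ∫⁻ _ : Fin n, ∫⁻ x, f x ∂μ ∂empiricalMeasure n id :=
        lintegral_congr fun i ↦ (measurePreserving_eval (fun _ ↦ μ) i).lintegral_comp hf
    _ = ∫⁻ x, f x ∂μ := by rw [lintegral_const, measure_univ, mul_one]

theorem measurePreserving_apply_perm_sampleMeasure_prod [NeZero n] [IsProbabilityMeasure μ]
    {s : (Fin n → E) → Equiv.Perm (Fin n)} (hs : ∀ i, Measurable fun Y ↦ s Y i) :
    MeasurePreserving (fun z : (Fin n → E) × Fin n ↦ z.1 (s z.1 z.2))
      ((sampleMeasure μ n).prod (empiricalMeasure n id)) μ :=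
  (measurePreserving_apply_sampleMeasure_prod μ).comp <|
    (MeasurePreserving.id _).skew_product (g := fun Y i ↦ s Y i)
      (measurable_from_prod_countable_left hs)
      (.of_forall fun Y ↦ (measurePreserving_perm_empiricalMeasure (s Y)).map_eq)

variable [MetricSpace E] [OpensMeasurableSpace E] [SecondCountableTopology E]

theorem Wp_empiricalMeasure_rpow_le_lintegral [NeZero n] [IsProbabilityMeasure μ] (hp : 0 < p)
    (X : Fin n → E) :
    Wp p (empiricalMeasure n X) μ ^ p ≤
      ∫⁻ Y, Wp p (empiricalMeasure n X) (empiricalMeasure n Y) ^ p ∂sampleMeasure μ n := by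
  let _ : MeasurableSpace (Equiv.Perm (Fin n)) := ⊤
  obtain ⟨s, hs, hs_min⟩ := exists_measurable_forall_le fun σ : Equiv.Perm (Fin n) ↦
    (measurable_matchingCost (p := p) σ).comp (measurable_prodMk_left (x := X))
  have hs_apply (i : Fin n) : Measurable fun Y ↦ s Y i :=
    (measurable_from_top (f := fun σ : Equiv.Perm (Fin n) ↦ σ i)).comp hs
  have hX : MeasurePreserving (fun z : (Fin n → E) × Fin n ↦ X z.2)
      ((sampleMeasure μ n).prod (empiricalMeasure n id)) (empiricalMeasure n X) :=
    (measurePreserving_empiricalMeasure_id X).comp measurePreserving_snd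
  have hY := measurePreserving_apply_perm_sampleMeasure_prod μ hs_apply
  rw [← ENNReal.le_rpow_inv_iff hp, ← one_div]
  refine (Wp_le_of_measurePreserving hX hY).trans_eq ?_
  congr 1
  calc ∫⁻ z, edist (X z.2) (z.1 (s z.1 z.2)) ^ p ∂(sampleMeasure μ n).prod (empiricalMeasure n id)
      = ∫⁻ Y, ∫⁻ i, edist (X i) (Y (s Y i)) ^ p ∂empiricalMeasure n id ∂sampleMeasure μ n :=
        lintegral_prod _ (((hX.measurable.edist hY.measurable).pow_const p).aemeasurable)
    _ = ∫⁻ Y, matchingCost p X Y (s Y) ∂sampleMeasure μ n := by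
        simp only [lintegral_edist_rpow_empiricalMeasure]
    _ = ∫⁻ Y, Wp p (empiricalMeasure n X) (empiricalMeasure n Y) ^ p ∂sampleMeasure μ n := by
        refine lintegral_congr fun Y ↦ ?_
        rw [Wp_empiricalMeasure_rpow hp]
        exact le_antisymm (le_iInf (hs_min Y)) (iInf_le _ _)

theorem expWpPow_le_Lp_two_samples [NeZero n] [IsProbabilityMeasure μ] (hp : 0 < p) :
    expWpPow p μ n ≤
      (∫⁻ ω, Wp p (empiricalMeasure n ω.1) (empiricalMeasure n ω.2) ^ p
        ∂(sampleMeasure μ n).prod (sampleMeasure μ n)) ^ (1 / p) := by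
  rw [lintegral_prod _ (measurable_Wp_empiricalMeasure_rpow hp).aemeasurable]
  unfold expWpPow
  gcongr with X
  exact Wp_empiricalMeasure_rpow_le_lintegral μ hp X

theorem Lp_two_samples_le_two_mul_expWpPow [NeZero n] [IsProbabilityMeasure μ] (hp : 1 ≤ p) :
    (∫⁻ ω, Wp p (empiricalMeasure n ω.1) (empiricalMeasure n ω.2) ^ p
      ∂(sampleMeasure μ n).prod (sampleMeasure μ n)) ^ (1 / p) ≤ 2 * expWpPow p μ n := by
  let W (X : Fin n → E) : ℝ≥0∞ := Wp p (empiricalMeasure n X) μ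
  have hW : Measurable W := (continuous_Wp_empiricalMeasure hp μ).measurable
  calc (∫⁻ ω, Wp p (empiricalMeasure n ω.1) (empiricalMeasure n ω.2) ^ p
        ∂(sampleMeasure μ n).prod (sampleMeasure μ n)) ^ (1 / p)
      ≤ (∫⁻ ω, (W ω.1 + W ω.2) ^ p
          ∂(sampleMeasure μ n).prod (sampleMeasure μ n)) ^ (1 / p) := by
        gcongr with ω
        exact (Wp_empiricalMeasure_triangle hp ω.1 μ _).trans_eq (congrArg _ Wp_comm)
    _ ≤ (∫⁻ ω, W ω.1 ^ p ∂(sampleMeasure μ n).prod (sampleMeasure μ n)) ^ (1 / p)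
          + (∫⁻ ω, W ω.2 ^ p ∂(sampleMeasure μ n).prod (sampleMeasure μ n)) ^ (1 / p) :=
        ENNReal.lintegral_Lp_add_le (by fun_prop) (by fun_prop) hp
    _ = 2 * expWpPow p μ n := by
        rw [measurePreserving_fst.lintegral_comp (hW.pow_const p),
          measurePreserving_snd.lintegral_comp (hW.pow_const p), ← two_mul, expWpPow]

end TwoSamples

theorem stmt_10_general {E : Type*} [MetricSpace E] [TopologicalSpace.SeparableSpace E]
    [MeasurableSpace E] [OpensMeasurableSpace E] (p : ℝ) (hp : 1 ≤ p)
    (μ : Measure E) [IsProbabilityMeasure μ] (n : ℕ) (hn : 1 ≤ n) :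
    expWpPow p μ n ≤
      (∫⁻ ω : (Fin n → E) × (Fin n → E),
          (Wp p (empiricalMeasure n ω.1) (empiricalMeasure n ω.2)) ^ p
          ∂((sampleMeasure μ n).prod (sampleMeasure μ n))) ^ (1 / p) ∧
    (∫⁻ ω : (Fin n → E) × (Fin n → E),
        (Wp p (empiricalMeasure n ω.1) (empiricalMeasure n ω.2)) ^ p
        ∂((sampleMeasure μ n).prod (sampleMeasure μ n))) ^ (1 / p) ≤
      2 * expWpPow p μ n := by
  have : SecondCountableTopology E := UniformSpace.secondCountable_of_separable E
  have : NeZero n := ⟨by lia⟩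
  exact ⟨expWpPow_le_Lp_two_samples μ (by positivity), Lp_two_samples_le_two_mul_expWpPow μ hp⟩

/-- **Lemma (2samples).** Let `(E, d_E)` be a separable metric space, `p ≥ 1`,
`μ ∈ 𝒫_p(E)` and `n ∈ ℕ`. Let `μ_n` and `μ_n'` be two independent empirical measures
of `μ` with sample size `n` (built from `2n` mutually independent samples, modeled by
the product of two copies of the `n`-sample law). Then
`‖W_p(μ_n, μ)‖_{L^p} ≤ ‖W_p(μ_n, μ_n')‖_{L^p} ≤ 2 ‖W_p(μ_n, μ)‖_{L^p}`. -/
theorem stmt_10 {E : Type*} [MetricSpace E] [TopologicalSpace.SeparableSpace E]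
    [MeasurableSpace E] [BorelSpace E]
    (p : ℝ) (hp : 1 ≤ p)
    (μ : Measure E) [IsProbabilityMeasure μ] (hμ : HasFiniteMoment p μ)
    (n : ℕ) (hn : 1 ≤ n) :
    expWpPow p μ n ≤
      (∫⁻ ω : (Fin n → E) × (Fin n → E),
          (Wp p (empiricalMeasure n ω.1) (empiricalMeasure n ω.2)) ^ p
          ∂((sampleMeasure μ n).prod (sampleMeasure μ n))) ^ (1 / p) ∧
    (∫⁻ ω : (Fin n → E) × (Fin n → E),
        (Wp p (empiricalMeasure n ω.1) (empiricalMeasure n ω.2)) ^ p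
        ∂((sampleMeasure μ n).prod (sampleMeasure μ n))) ^ (1 / p) ≤
      2 * expWpPow p μ n :=
  stmt_10_general p hp μ n hn
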